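/- Let f : [0,∞) → ℝ satisfy |f(x) − f(y)| ≤ L|x − y|^α/(1 + x + y)^α for all x, y ∈ [0,∞), with L > 0 and α ∈ (0,1] (the general Hölder-type condition with γ = 1 and β = α). Then for all n ≥ 1 and uniformly for all x ∈ (0,∞), the Baskakov operator satisfies |f(x) − S_n(f;x)| ≤ L/n^{α/2}. -/

import Mathlib

/-!
The weights of `S_n` form a probability distribution on the nodes `k / n` (a rescaled negative
binomial one) with mean `x` and variance `x (1 + x) / n`. As `t ↦ t ^ (α / 2)` is concave, Jensen's
inequality applied to `(x - k / n) ^ 2` bounds the mean of `|x - k / n| ^ α` by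
`(x (1 + x) / n) ^ (α / 2)`, which is at most `(1 + x) ^ α / n ^ (α / 2)`. The denominator
`(1 + x + y) ^ α ≥ (1 + x) ^ α` of the Hölder condition absorbs the growth in `x`.
-/

section Jensen

variable {p : ℝ}

lemma rpow_le_tangent (hp₀ : 0 ≤ p) (hp₁ : p ≤ 1) {a c : ℝ} (ha : 0 ≤ a) (hc : 0 < c) :
    a ^ p ≤ c ^ p * (1 + p * (a / c - 1)) := by
  have hac : 0 ≤ a / c := by positivity
  have bernoulli : (a / c) ^ p ≤ 1 + p * (a / c - 1) := by
    simpa using rpow_one_add_le_one_add_mul_self (s := a / c - 1) (by linarith) hp₀ hp₁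
  calc a ^ p = c ^ p * (a / c) ^ p := by
        rw [← Real.mul_rpow hc.le hac, mul_div_cancel₀ a hc.ne']
    _ ≤ c ^ p * (1 + p * (a / c - 1)) := by gcongr

variable {ι : Type*} {w a : ι → ℝ} {A : ℝ}

lemma summable_and_tsum_mul_rpow_le_of_pos (hp₀ : 0 ≤ p) (hp₁ : p ≤ 1) (hw : ∀ i, 0 ≤ w i)
    (hw₁ : HasSum w 1) (ha : ∀ i, 0 ≤ a i) (hA : 0 < A) (hwa : HasSum (fun i ↦ w i * a i) A) :
    Summable (fun i ↦ w i * a i ^ p) ∧ ∑' i, w i * a i ^ p ≤ A ^ p := by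
  have tangent (i : ι) : w i * a i ^ p ≤ A ^ p * ((1 - p) * w i + p / A * (w i * a i)) :=
    calc w i * a i ^ p ≤ w i * (A ^ p * (1 + p * (a i / A - 1))) :=
          mul_le_mul_of_nonneg_left (rpow_le_tangent hp₀ hp₁ (ha i) hA) (hw i)
      _ = A ^ p * ((1 - p) * w i + p / A * (w i * a i)) := by ring
  have tangent_sum :
      HasSum (fun i ↦ A ^ p * ((1 - p) * w i + p / A * (w i * a i))) (A ^ p) := by
    convert! ((hw₁.mul_left (1 - p)).add (hwa.mul_left (p / A))).mul_left (A ^ p) using 1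
    rw [mul_one, div_mul_cancel₀ p hA.ne', sub_add_cancel, mul_one]
  have summable : Summable (fun i ↦ w i * a i ^ p) :=
    .of_nonneg_of_le (fun i ↦ mul_nonneg (hw i) (Real.rpow_nonneg (ha i) p)) tangent
      tangent_sum.summable
  exact ⟨summable, hasSum_le tangent summable.hasSum tangent_sum⟩

lemma summable_and_tsum_mul_rpow_le (hp₀ : 0 ≤ p) (hp₁ : p ≤ 1) (hw : ∀ i, 0 ≤ w i)
    (hw₁ : HasSum w 1) (ha : ∀ i, 0 ≤ a i) (hwa : HasSum (fun i ↦ w i * a i) A) :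
    Summable (fun i ↦ w i * a i ^ p) ∧ ∑' i, w i * a i ^ p ≤ A ^ p := by
  have hwa₀ (i : ι) : 0 ≤ w i * a i := mul_nonneg (hw i) (ha i)
  obtain rfl | hA := (hwa.nonneg hwa₀).eq_or_lt
  · obtain rfl | hp := hp₀.eq_or_lt
    · simpa using ⟨hw₁.summable, hw₁.tsum_eq.le⟩
    · have vanish (i : ι) : w i * a i ^ p = 0 := by
        have := congrFun ((hasSum_zero_iff_of_nonneg hwa₀).1 hwa) i
        obtain h | h := mul_eq_zero.1 this <;> simp [h, hp.ne']
      simp [vanish, hp.ne', summable_zero]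
  · exact summable_and_tsum_mul_rpow_le_of_pos hp₀ hp₁ hw hw₁ ha hA hwa

end Jensen

/-- The weight of the node `k / n` in the Baskakov operator `S_n` at `x`: the probability of `k`
under the negative binomial distribution with parameters `n` and `1 / (1 + x)`. The truncated
subtraction is harmless: for `n = 0` the weight is the point mass at `k = 0`. -/
noncomputable def baskakovWeight (n k : ℕ) (x : ℝ) : ℝ :=
  ((n + k - 1).choose k : ℝ) * x ^ k / (1 + x) ^ (n + k)

section Moments

variable {x : ℝ}

lemma baskakovWeight_nonneg (hx : 0 ≤ x) (n k : ℕ) : 0 ≤ baskakovWeight n k x := by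
  unfold baskakovWeight
  positivity

lemma hasSum_baskakovWeight (hx : 0 ≤ x) (n : ℕ) : HasSum (fun k ↦ baskakovWeight n k x) 1 := by
  cases n with
  | zero =>
    convert hasSum_single (f := fun k ↦ baskakovWeight 0 k x) 0 fun k hk ↦ ?_ using 1
    · simp [baskakovWeight]
    · simp [baskakovWeight, Nat.choose_eq_zero_of_lt (Nat.sub_one_lt hk)]
  | succ m =>
    have hr : ‖x / (1 + x)‖ < 1 := by
      rw [Real.norm_of_nonneg (by positivity), div_lt_one (by positivity)]
      linarith
    have hr' : 1 - x / (1 + x) = (1 + x)⁻¹ := by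
      field_simp
      ring
    convert! (hasSum_choose_mul_geometric_of_norm_lt_one m hr).mul_right ((1 + x) ^ (m + 1))⁻¹
      using 1
    · funext k
      have hchoose : (m + 1 + k - 1).choose k = (k + m).choose m := by
        rw [show m + 1 + k - 1 = k + m by omega, Nat.choose_symm_add]
      rw [baskakovWeight, hchoose, div_pow, pow_add]
      field_simp
    · rw [hr', inv_pow, one_div, inv_inv, mul_inv_cancel₀ (by positivity)]

lemma baskakovWeight_succ_mul (hx : 0 ≤ x) (n k : ℕ) :
    baskakovWeight n (k + 1) x * (k + 1 : ℕ) = n * x * baskakovWeight (n + 1) k x := by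
  have hchoose : ((n + k).choose (k + 1) : ℝ) * (k + 1) = (n + k).choose k * n := by
    have := Nat.choose_succ_right_eq (n + k) k
    rw [Nat.add_sub_cancel] at this
    exact_mod_cast this
  rw [baskakovWeight, baskakovWeight, show n + (k + 1) - 1 = n + k by omega,
    show n + 1 + k - 1 = n + k by omega, show n + 1 + k = n + (k + 1) by omega]
  field_simp
  push_cast
  linear_combination x ^ (k + 1) * hchoose

lemma hasSum_baskakovWeight_mul_cast (hx : 0 ≤ x) (n : ℕ) :
    HasSum (fun k ↦ baskakovWeight n k x * k) (n * x) := by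
  rw [← hasSum_nat_add_iff' 1]
  simp only [baskakovWeight_succ_mul hx]
  simpa using (hasSum_baskakovWeight hx (n + 1)).mul_left (n * x)

lemma hasSum_baskakovWeight_mul_cast_sq (hx : 0 ≤ x) (n : ℕ) :
    HasSum (fun k ↦ baskakovWeight n k x * (k : ℝ) ^ 2) (n * x * ((n + 1) * x + 1)) := by
  rw [← hasSum_nat_add_iff' 1]
  convert! ((hasSum_baskakovWeight_mul_cast hx (n + 1)).add
    (hasSum_baskakovWeight hx (n + 1))).mul_left (n * x) using 1
  · funext k
    rw [sq, ← mul_assoc, baskakovWeight_succ_mul hx]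
    push_cast
    ring
  · simp

lemma hasSum_baskakovWeight_mul_sub_sq (hx : 0 ≤ x) {n : ℕ} (hn : n ≠ 0) :
    HasSum (fun k ↦ baskakovWeight n k x * (x - k / n) ^ 2) (x * (1 + x) / n) := by
  convert! (((hasSum_baskakovWeight hx n).mul_left (x ^ 2)).sub
    ((hasSum_baskakovWeight_mul_cast hx n).mul_left (2 * x / n))).add
    ((hasSum_baskakovWeight_mul_cast_sq hx n).mul_left (1 / (n : ℝ) ^ 2)) using 1
  · funext k
    field_simp
    ring
  · field_simp
    ring

lemma summable_and_tsum_baskakovWeight_mul_abs_rpow_le (hx : 0 ≤ x) {n : ℕ} (hn : n ≠ 0) {α : ℝ}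
    (hα₀ : 0 ≤ α) (hα₂ : α ≤ 2) :
    Summable (fun k ↦ baskakovWeight n k x * |x - k / n| ^ α) ∧
      ∑' k, baskakovWeight n k x * |x - k / n| ^ α ≤ (x * (1 + x) / n) ^ (α / 2) := by
  have sq_rpow (t : ℝ) : (t ^ 2) ^ (α / 2) = |t| ^ α := by
    rw [Real.rpow_div_two_eq_sqrt α (sq_nonneg t), Real.sqrt_sq_eq_abs]
  simpa only [sq_rpow] using summable_and_tsum_mul_rpow_le (p := α / 2) (by linarith) (by linarith)
    (baskakovWeight_nonneg hx n) (hasSum_baskakovWeight hx n) (fun k ↦ sq_nonneg (x - k / n))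
    (hasSum_baskakovWeight_mul_sub_sq hx hn)

end Moments

section Approximation

variable {E : Type*} [NormedAddCommGroup E] [NormedSpace ℝ E]

/-- The Baskakov operator `S_n(f; x)`, for functions with values in a real normed space. It is
defined through `tsum`, so it takes the junk value `0` where the series does not converge. -/
noncomputable def baskakov (n : ℕ) (f : ℝ → E) (x : ℝ) : E :=
  ∑' k : ℕ, baskakovWeight n k x • f (k / n)

variable [CompleteSpace E] {f : ℝ → E} {x α : ℝ} {n : ℕ}

lemma norm_sub_baskakov_le (hα₀ : 0 ≤ α) (hα₂ : α ≤ 2) (hn : n ≠ 0) (hx : 0 ≤ x) {M : ℝ}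
    (hM : 0 ≤ M) (hf : ∀ y, 0 ≤ y → ‖f x - f y‖ ≤ M * |x - y| ^ α) :
    ‖f x - baskakov n f x‖ ≤ M * (x * (1 + x) / n) ^ (α / 2) := by
  obtain ⟨hmoment, hmoment_le⟩ :=
    summable_and_tsum_baskakovWeight_mul_abs_rpow_le hx hn hα₀ hα₂
  have hbound (k : ℕ) : ‖baskakovWeight n k x • (f x - f (k / n))‖ ≤
      M * (baskakovWeight n k x * |x - k / n| ^ α) := by
    have hw := baskakovWeight_nonneg hx n k
    rw [norm_smul, Real.norm_of_nonneg hw, mul_left_comm]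
    exact mul_le_mul_of_nonneg_left (hf _ (by positivity)) hw
  have herror : f x - baskakov n f x = ∑' k : ℕ, baskakovWeight n k x • (f x - f (k / n)) := by
    have hconst := (hasSum_baskakovWeight hx n).smul_const (f x)
    have hdiff := (Summable.of_norm_bounded (hmoment.mul_left M) hbound).hasSum
    have hsum := (hconst.sub hdiff).tsum_eq
    simp only [← smul_sub, sub_sub_cancel, one_smul] at hsum
    rw [baskakov, hsum, sub_sub_cancel]
  calc ‖f x - baskakov n f x‖
      ≤ M * ∑' k : ℕ, baskakovWeight n k x * |x - k / n| ^ α := by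
        rw [herror]
        exact tsum_of_norm_bounded (hmoment.hasSum.mul_left M) hbound
    _ ≤ M * (x * (1 + x) / n) ^ (α / 2) := by gcongr

theorem baskakov_uniform_bound_general (hα₀ : 0 ≤ α) (hα₂ : α ≤ 2) (hn : n ≠ 0) (hx : 0 ≤ x)
    {L : ℝ} (hL : 0 ≤ L)
    (hf : ∀ y, 0 ≤ y → ‖f x - f y‖ ≤ L * |x - y| ^ α / (1 + x + y) ^ α) :
    ‖f x - baskakov n f x‖ ≤ L / (n : ℝ) ^ (α / 2) := by
  have hholder (y : ℝ) (hy : 0 ≤ y) : ‖f x - f y‖ ≤ L / (1 + x) ^ α * |x - y| ^ α :=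
    calc ‖f x - f y‖ ≤ L * |x - y| ^ α / (1 + x + y) ^ α := hf y hy
      _ ≤ L * |x - y| ^ α / (1 + x) ^ α := by
        have hxy : 1 + x ≤ 1 + x + y := le_add_of_nonneg_right hy
        gcongr
      _ = L / (1 + x) ^ α * |x - y| ^ α := by ring
  have hvariance : (x * (1 + x) / n) ^ (α / 2) ≤ (1 + x) ^ α / (n : ℝ) ^ (α / 2) :=
    calc (x * (1 + x) / n) ^ (α / 2) ≤ ((1 + x) ^ 2 / n) ^ (α / 2) := by
          gcongr
          nlinarith
      _ = (1 + x) ^ α / (n : ℝ) ^ (α / 2) := by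
          rw [Real.div_rpow (by positivity) (by positivity),
            Real.rpow_div_two_eq_sqrt α (sq_nonneg (1 + x)), Real.sqrt_sq (by positivity)]
  calc ‖f x - baskakov n f x‖ ≤ L / (1 + x) ^ α * (x * (1 + x) / n) ^ (α / 2) :=
        norm_sub_baskakov_le hα₀ hα₂ hn hx (by positivity) hholder
    _ ≤ L / (1 + x) ^ α * ((1 + x) ^ α / (n : ℝ) ^ (α / 2)) := by gcongr
    _ = L / (n : ℝ) ^ (α / 2) := div_mul_div_cancel₀ (by positivity)

end Approximation

/-- Uniform error bound for the Baskakov operator for a function satisfying the general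
Hölder-type condition with `γ = 1` and `β = α`: `|f(x) - S_n(f;x)| ≤ L / n^(α/2)`. -/
theorem baskakov_uniform_bound
    (f : ℝ → ℝ) (L α : ℝ) (hL : 0 < L) (hα : 0 < α) (hα1 : α ≤ 1)
    (hf : ∀ y z : ℝ, 0 ≤ y → 0 ≤ z →
      |f y - f z| ≤ L * |y - z| ^ α / (1 + y + z) ^ α)
    (n : ℕ) (hn : 1 ≤ n) (x : ℝ) (hx : 0 < x) :
    |f x - ∑' (k : ℕ), f ((k : ℝ) / n) *
        (((n + k - 1).choose k : ℝ) * x ^ k / (1 + x) ^ (n + k))|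
      ≤ L / (n : ℝ) ^ (α / 2) := by
  simpa only [baskakov, baskakovWeight, smul_eq_mul, mul_comm, Real.norm_eq_abs] using
    baskakov_uniform_bound_general hα.le (hα1.trans one_le_two) (Nat.one_le_iff_ne_zero.1 hn)
      hx.le hL.le (f := f) fun y ↦ hf x y hx.le
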